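/- Let n ≥ 2 and let x_1, …, x_n be real numbers with at least two distinct values. For λ ∈ ℝ define S_Ψ(λ) = Σ_i Ψ(λ, x_i), S_{Ψ²}(λ) = Σ_i Ψ(λ, x_i)², S_{∂Ψ}(λ) = Σ_i ∂_λΨ(λ, x_i), S_{∂Ψ²}(λ) = Σ_i 2·Ψ(λ, x_i)·∂_λΨ(λ, x_i), and S_φ = Σ_i sign(x_i)·log(|x_i| + 1). Then the Yeo-Johnson negative log-likelihood NLL(λ) = (n/2)·log σ²_λ − (λ−1)·S_φ + (n/2)·log(2π) is differentiable in λ, with NLL′(λ) = (n/2)·(S_{∂Ψ²}(λ) − 2·S_Ψ(λ)·S_{∂Ψ}(λ)/n)/(S_{Ψ²}(λ) − S_Ψ(λ)²/n) − S_φ. -/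

import Mathlib

/-!
The Yeo-Johnson transformation glues two Box-Cox transformations of exponents `l` and `2 - l`. For
a fixed base `a`, the Box-Cox transformation is the difference quotient at `0` of the analytic
function `m ↦ a ^ m`, with the derivative `log a` filling the gap at `m = 0`; this makes it
differentiable in the exponent, also at `m = 0`. For a fixed exponent it is strictly increasing in
the base, so the transformed data are still not all equal, and strict convexity of the square makes
their variance positive. The logarithm of the variance can then be differentiated by the chain rule.
-/

open scoped BigOperators

/-- The Yeo-Johnson transformation. -/
noncomputable def yj (l x : ℝ) : ℝ :=
  if 0 ≤ x then
    if l ≠ 0 then ((x + 1) ^ l - 1) / l else Real.log (x + 1)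
  else
    if l ≠ 2 then -(((1 - x) ^ (2 - l) - 1) / (2 - l)) else -Real.log (1 - x)

/-- The partial derivative of the Yeo-Johnson transformation with respect to `λ`. -/
noncomputable def yjDeriv (l x : ℝ) : ℝ := deriv (fun t => yj t x) l

open Finset

lemma differentiable_dslope {𝕜 E : Type*} [NontriviallyNormedField 𝕜] [NormedAddCommGroup E]
    [NormedSpace 𝕜 E] {f : 𝕜 → E} {a : 𝕜} (hf : Differentiable 𝕜 f) (ha : AnalyticAt 𝕜 f a) :
    Differentiable 𝕜 (dslope f a) := by
  intro b
  rcases eq_or_ne b a with rfl | hb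
  · obtain ⟨p, hp⟩ := ha
    exact hp.has_fpower_series_dslope_fslope.differentiableAt
  · exact (differentiableAt_dslope_of_ne hb).2 (hf b)

lemma hasDerivAt_const_rpow {a : ℝ} (ha : 0 < a) (m : ℝ) :
    HasDerivAt (fun s : ℝ => a ^ s) (a ^ m * Real.log a) m :=
  (Real.hasStrictDerivAt_const_rpow ha m).hasDerivAt

lemma analyticAt_const_rpow {a : ℝ} (ha : 0 < a) (m : ℝ) :
    AnalyticAt ℝ (fun s : ℝ => a ^ s) m := by
  simp only [Real.rpow_def_of_pos ha]
  fun_prop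

section SampleVariance

variable {ι : Type*} {s : Finset ι}

/-- The variance of the uniform distribution on the values `y i`, `i ∈ s`, as the mean of the
squares minus the square of the mean; this is the paper's `σ²`, normalised by `#s`, not `#s - 1`. -/
noncomputable def sampleVariance (s : Finset ι) (y : ι → ℝ) : ℝ :=
  (∑ i ∈ s, y i ^ 2) / #s - ((∑ i ∈ s, y i) / #s) ^ 2

lemma sum_div_card_sq_lt_sum_sq_div_card {y : ι → ℝ} (hy : ∃ i ∈ s, ∃ j ∈ s, y i ≠ y j) :
    ((∑ i ∈ s, y i) / #s) ^ 2 < (∑ i ∈ s, y i ^ 2) / #s := by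
  have hs : s.Nonempty := hy.imp fun _ h => h.1
  have jensen := (even_two.strictConvexOn_pow two_ne_zero).map_sum_lt
    (t := s) (w := fun _ => (#s : ℝ)⁻¹) (p := y) (fun _ _ => by positivity)
    (by simp [hs.ne_empty]) (fun _ _ => Set.mem_univ _) hy
  simpa only [smul_eq_mul, inv_mul_eq_div, ← sum_div] using jensen

lemma sampleVariance_pos {y : ι → ℝ} (hy : ∃ i ∈ s, ∃ j ∈ s, y i ≠ y j) :
    0 < sampleVariance s y :=
  sub_pos.2 (sum_div_card_sq_lt_sum_sq_div_card hy)

lemma sampleVariance_eq_div (s : Finset ι) (y : ι → ℝ) :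
    sampleVariance s y = (∑ i ∈ s, y i ^ 2 - (∑ i ∈ s, y i) ^ 2 / #s) / #s := by
  rw [sampleVariance]
  ring

lemma hasDerivAt_sampleVariance {f : ι → ℝ → ℝ} {f' : ι → ℝ} {t : ℝ}
    (hf : ∀ i ∈ s, HasDerivAt (f i) (f' i) t) :
    HasDerivAt (fun u => sampleVariance s fun i => f i u)
      ((∑ i ∈ s, 2 * f i t * f' i - 2 * (∑ i ∈ s, f i t) * (∑ i ∈ s, f' i) / #s) / #s) t := by
  have hsum : HasDerivAt (fun u => ∑ i ∈ s, f i u) (∑ i ∈ s, f' i) t := HasDerivAt.fun_sum hf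
  have hsumSq : HasDerivAt (fun u => ∑ i ∈ s, f i u ^ 2) (∑ i ∈ s, 2 * f i t * f' i) t :=
    HasDerivAt.fun_sum fun i hi => by simpa using (hf i hi).fun_pow 2
  refine ((hsumSq.div_const (#s : ℝ)).fun_sub ((hsum.div_const (#s : ℝ)).fun_pow 2)).congr_deriv ?_
  push_cast
  ring

lemma hasDerivAt_log_sampleVariance {f : ι → ℝ → ℝ} {f' : ι → ℝ} {t : ℝ}
    (hf : ∀ i ∈ s, HasDerivAt (f i) (f' i) t) (hne : ∃ i ∈ s, ∃ j ∈ s, f i t ≠ f j t) :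
    HasDerivAt (fun u => Real.log (sampleVariance s fun i => f i u))
      ((∑ i ∈ s, 2 * f i t * f' i - 2 * (∑ i ∈ s, f i t) * (∑ i ∈ s, f' i) / #s) /
        (∑ i ∈ s, f i t ^ 2 - (∑ i ∈ s, f i t) ^ 2 / #s)) t := by
  have hs : s.Nonempty := hne.imp fun _ h => h.1
  have hcard : (#s : ℝ) ≠ 0 := by positivity
  refine ((hasDerivAt_sampleVariance hf).log (sampleVariance_pos hne).ne').congr_deriv ?_
  rw [sampleVariance_eq_div, div_div_div_cancel_right₀ hcard]

end SampleVariance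

section BoxCox

/-- The Box-Cox transformation of a positive number `a` with exponent `m`; the two branches of the
Yeo-Johnson transformation are instances of it. -/
noncomputable def boxCox (m a : ℝ) : ℝ :=
  if m = 0 then Real.log a else (a ^ m - 1) / m

lemma boxCox_zero (a : ℝ) : boxCox 0 a = Real.log a := if_pos rfl

lemma boxCox_of_ne_zero {m : ℝ} (hm : m ≠ 0) (a : ℝ) : boxCox m a = (a ^ m - 1) / m := if_neg hm

lemma boxCox_one (m : ℝ) : boxCox m 1 = 0 := by simp [boxCox]

lemma boxCox_eq_dslope {a : ℝ} (ha : 0 < a) (m : ℝ) :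
    boxCox m a = dslope (fun s : ℝ => a ^ s) 0 m := by
  rcases eq_or_ne m 0 with rfl | hm
  · simp [boxCox_zero, (hasDerivAt_const_rpow ha 0).deriv]
  · simp [boxCox_of_ne_zero hm, dslope_of_ne _ hm, slope_def_field]

lemma differentiable_boxCox {a : ℝ} (ha : 0 < a) : Differentiable ℝ fun m => boxCox m a := by
  simp only [boxCox_eq_dslope ha]
  exact differentiable_dslope (fun m => (hasDerivAt_const_rpow ha m).differentiableAt)
    (analyticAt_const_rpow ha 0)

lemma strictMonoOn_boxCox (m : ℝ) : StrictMonoOn (boxCox m) (Set.Ioi 0) := by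
  intro a ha b hb hab
  rcases lt_trichotomy m 0 with hm | rfl | hm
  · rw [boxCox_of_ne_zero hm.ne, boxCox_of_ne_zero hm.ne]
    exact (div_lt_div_right_of_neg hm).2
      (sub_lt_sub_right (Real.strictAntiOn_rpow_Ioi_of_exponent_neg hm ha hb hab) 1)
  · simpa only [boxCox_zero] using Real.log_lt_log ha hab
  · rw [boxCox_of_ne_zero hm.ne', boxCox_of_ne_zero hm.ne']
    exact div_lt_div_of_pos_right
      (sub_lt_sub_right (Real.rpow_lt_rpow (le_of_lt ha) hab hm) 1) hm

end BoxCox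

section YeoJohnson

lemma yj_of_nonneg {x : ℝ} (hx : 0 ≤ x) (l : ℝ) : yj l x = boxCox l (x + 1) := by
  simp [yj, boxCox, hx]

lemma yj_of_nonpos {x : ℝ} (hx : x ≤ 0) (l : ℝ) : yj l x = -boxCox (2 - l) (1 - x) := by
  rcases hx.eq_or_lt with rfl | hx
  · simp [yj_of_nonneg, boxCox_one]
  · rcases eq_or_ne l 2 with rfl | hl
    · simp [yj, boxCox, hx.not_ge]
    · simp [yj, boxCox, hx.not_ge, hl, sub_ne_zero.2 hl.symm]

lemma differentiable_yj (x : ℝ) : Differentiable ℝ fun l => yj l x := by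
  rcases le_total 0 x with hx | hx
  · simp only [yj_of_nonneg hx]
    exact differentiable_boxCox (by linarith)
  · simp only [yj_of_nonpos hx]
    exact ((differentiable_boxCox (by linarith)).comp (differentiable_id.const_sub 2)).neg

lemma hasDerivAt_yj (l x : ℝ) : HasDerivAt (fun t => yj t x) (yjDeriv l x) l :=
  (differentiable_yj x l).hasDerivAt

lemma strictMono_yj (l : ℝ) : StrictMono (yj l) := by
  refine StrictMonoOn.Iic_union_Ici (a := 0) (fun x hx y hy hxy => ?_) fun x hx y hy hxy => ?_
  · rw [Set.mem_Iic] at hx hy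
    rw [yj_of_nonpos hx, yj_of_nonpos hy, neg_lt_neg_iff]
    exact strictMonoOn_boxCox (2 - l) (Set.mem_Ioi.2 (by linarith)) (Set.mem_Ioi.2 (by linarith))
      (by linarith)
  · rw [Set.mem_Ici] at hx hy
    rw [yj_of_nonneg hx, yj_of_nonneg hy]
    exact strictMonoOn_boxCox l (Set.mem_Ioi.2 (by linarith)) (Set.mem_Ioi.2 (by linarith))
      (by linarith)

end YeoJohnson

/-- The Yeo-Johnson negative log-likelihood is differentiable in `λ`, with the stated
closed-form derivative. -/
theorem yj_nll_hasDerivAt (n : ℕ) (hn : 2 ≤ n) (x : Fin n → ℝ)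
    (hdist : ∃ i j, x i ≠ x j) (l : ℝ) :
    HasDerivAt (fun t : ℝ =>
        (n / 2 : ℝ) *
            Real.log ((∑ i, yj t (x i) ^ 2) / n - ((∑ i, yj t (x i)) / n) ^ 2)
          - (t - 1) * ∑ i, Real.sign (x i) * Real.log (|x i| + 1)
          + (n / 2 : ℝ) * Real.log (2 * Real.pi))
      ((n / 2 : ℝ) *
          ((∑ i, 2 * yj l (x i) * yjDeriv l (x i))
              - 2 * (∑ i, yj l (x i)) * (∑ i, yjDeriv l (x i)) / n)
          / ((∑ i, yj l (x i) ^ 2) - (∑ i, yj l (x i)) ^ 2 / n)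
        - ∑ i, Real.sign (x i) * Real.log (|x i| + 1)) l := by
  have hne : ∃ i ∈ univ, ∃ j ∈ univ, yj l (x i) ≠ yj l (x j) := by
    simpa [(strictMono_yj l).injective.eq_iff] using hdist
  have hlog := hasDerivAt_log_sampleVariance (fun i _ => hasDerivAt_yj l (x i)) hne
  have hlin := ((hasDerivAt_id l).sub_const 1).mul_const
    (∑ i, Real.sign (x i) * Real.log (|x i| + 1))
  have hnll := ((hlog.const_mul (n / 2 : ℝ)).fun_sub hlin).add_const
    ((n / 2 : ℝ) * Real.log (2 * Real.pi))
  simpa only [sampleVariance, card_univ, Fintype.card_fin, id_eq, one_mul, mul_div_assoc]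
    using hnll
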